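/- For every commutative ring R and every n ≥ 1, the R-algebra homomorphism φ : Cl → M_{2^n}(R) extending the linear map (v,w) ↦ [[0, S_{n-1}(v,w)], [S̄_{n-1}(v,w), 0]] is an isomorphism of R-algebras. -/

import Mathlib

open Matrix

noncomputable section

/-- Reindexing equivalence `Fin (2 ^ n) ⊕ Fin (2 ^ n) ≃ Fin (2 ^ (n + 1))`. -/
def pow2Equiv (n : ℕ) : Fin (2 ^ n) ⊕ Fin (2 ^ n) ≃ Fin (2 ^ (n + 1)) :=
  finSumFinEquiv.trans (finCongr (by rw [pow_succ]; ring))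

/-- The Suslin matrix `S_n(v, w)` of size `2 ^ n` associated to `v, w : Fin (n+1) → R`. -/
def sus (R : Type) [CommRing R] : (n : ℕ) → (Fin (n + 1) → R) → (Fin (n + 1) → R) →
    Matrix (Fin (2 ^ n)) (Fin (2 ^ n)) R
  | 0, v, _ => v 0 • 1
  | n + 1, v, w =>
      Matrix.reindex (pow2Equiv n) (pow2Equiv n)
        (Matrix.fromBlocks (v 0 • 1) (sus R n (v ∘ Fin.succ) (w ∘ Fin.succ))
          (-(sus R n (w ∘ Fin.succ) (v ∘ Fin.succ))ᵀ) (w 0 • 1))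

/-- The conjugate Suslin matrix `S̄_n(v, w) = S_n(w, v)ᵀ`. -/
def susBar (R : Type) [CommRing R] (n : ℕ) (v w : Fin (n + 1) → R) :
    Matrix (Fin (2 ^ n)) (Fin (2 ^ n)) R :=
  (sus R n w v)ᵀ

/-- Suslin's matrices `J_n`. -/
def Jmat (R : Type) [CommRing R] : (n : ℕ) → Matrix (Fin (2 ^ n)) (Fin (2 ^ n)) R
  | 0 => 1
  | n + 1 =>
      if Even (n + 1) then
        Matrix.reindex (pow2Equiv n) (pow2Equiv n)
          (Matrix.fromBlocks (Jmat R n) 0 0 (-(Jmat R n)))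
      else
        Matrix.reindex (pow2Equiv n) (pow2Equiv n)
          (Matrix.fromBlocks 0 (Jmat R n) (-(Jmat R n)) 0)

/-- The involution `M ↦ M* = J_n · Mᵀ · J_nᵀ`. -/
def invol (R : Type) [CommRing R] (n : ℕ) (M : Matrix (Fin (2 ^ n)) (Fin (2 ^ n)) R) :
    Matrix (Fin (2 ^ n)) (Fin (2 ^ n)) R :=
  Jmat R n * Mᵀ * (Jmat R n)ᵀ

/-- `φ(v, w) = [[0, S_n(v,w)], [S̄_n(v,w), 0]]` (note the shift: vectors in `R^{n+1}`,
matrices of size `2 ^ (n + 1)`). -/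
def phiMat (R : Type) [CommRing R] (n : ℕ) (v w : Fin (n + 1) → R) :
    Matrix (Fin (2 ^ (n + 1))) (Fin (2 ^ (n + 1))) R :=
  Matrix.reindex (pow2Equiv n) (pow2Equiv n)
    (Matrix.fromBlocks 0 (sus R n v w) (susBar R n v w) 0)

/-- The set of Suslin matrices of size `2 ^ m`. -/
def SuslinSet (R : Type) [CommRing R] (m : ℕ) : Set (Matrix (Fin (2 ^ m)) (Fin (2 ^ m)) R) :=
  {S | ∃ v w : Fin (m + 1) → R, S = sus R m v w}

/-- The image of the hyperbolic space `R^{m+1} ⊕ R^{m+1}` inside the Clifford algebra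
`M_{2^{m+1}}(R)`. -/
def PhiSet (R : Type) [CommRing R] (m : ℕ) :
    Set (Matrix (Fin (2 ^ (m + 1))) (Fin (2 ^ (m + 1))) R) :=
  {x | ∃ v w : Fin (m + 1) → R, x = phiMat R m v w}

/-- The block diagonal matrix `diag(g₁, g₂)`. -/
def diagBlock (R : Type) [CommRing R] (m : ℕ)
    (g₁ g₂ : Matrix (Fin (2 ^ m)) (Fin (2 ^ m)) R) :
    Matrix (Fin (2 ^ (m + 1))) (Fin (2 ^ (m + 1))) R :=
  Matrix.reindex (pow2Equiv m) (pow2Equiv m) (Matrix.fromBlocks g₁ 0 0 g₂)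

/-- `Spin_{2(m+1)}(R)`, as the set of pairs `(g₁, g₂)` such that `x = diag(g₁, g₂)`
satisfies `x · x* = 1` and conjugation by `x` maps the image of the hyperbolic space
onto itself. -/
def SpinPair (R : Type) [CommRing R] (m : ℕ) :
    Set (Matrix (Fin (2 ^ m)) (Fin (2 ^ m)) R × Matrix (Fin (2 ^ m)) (Fin (2 ^ m)) R) :=
  {p | IsUnit p.1 ∧ IsUnit p.2 ∧
    diagBlock R m p.1 p.2 * invol R (m + 1) (diagBlock R m p.1 p.2) = 1 ∧
    (fun y => diagBlock R m p.1 p.2 * y * (diagBlock R m p.1 p.2)⁻¹) '' PhiSet R m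
      = PhiSet R m}

/-- The group `G_m(R)` of `g ∈ GL_{2^m}(R)` such that `g · S · g*` is a Suslin matrix
for every Suslin matrix `S`. -/
def GSet (R : Type) [CommRing R] (m : ℕ) : Set (Matrix (Fin (2 ^ m)) (Fin (2 ^ m)) R) :=
  {g | IsUnit g ∧ ∀ S ∈ SuslinSet R m, g * S * invol R m g ∈ SuslinSet R m}

/-- The group `SG_m(R)` of `g ∈ G_m(R)` preserving the length `l(S(v,w)) = v ⬝ᵥ w`. -/
def SGSet (R : Type) [CommRing R] (m : ℕ) : Set (Matrix (Fin (2 ^ m)) (Fin (2 ^ m)) R) :=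
  {g | g ∈ GSet R m ∧ ∀ v w v' w' : Fin (m + 1) → R,
    g * sus R m v w * invol R m g = sus R m v' w' → v' ⬝ᵥ w' = v ⬝ᵥ w}

/-- The hyperbolic quadratic form `q(v, w) = v ⬝ᵥ w` on `R^n ⊕ R^n`. -/
def hypForm (R : Type) [CommRing R] (n : ℕ) :
    QuadraticForm R ((Fin n → R) × (Fin n → R)) :=
  LinearMap.BilinMap.toQuadraticMap
    (LinearMap.mk₂ R (fun x y => x.1 ⬝ᵥ y.2)
      (fun x x' y => by simp [add_dotProduct])
      (fun c x y => by simp [smul_dotProduct])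
      (fun x y y' => by simp [dotProduct_add])
      (fun x c y => by simp [dotProduct_smul]))

/-- `E_i = S_m(e_i, 0)`. -/
def Emat (R : Type) [CommRing R] (m : ℕ) (i : Fin (m + 1)) :
    Matrix (Fin (2 ^ m)) (Fin (2 ^ m)) R :=
  sus R m (Pi.single i 1) 0

/-- `F_i = S_m(0, e_i)`. -/
def Fmat (R : Type) [CommRing R] (m : ℕ) (i : Fin (m + 1)) :
    Matrix (Fin (2 ^ m)) (Fin (2 ^ m)) R :=
  sus R m 0 (Pi.single i 1)

/-!
A Clifford algebra on a free module of rank `r` is free of rank `2 ^ r`, being linearly isomorphic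
to the exterior algebra. Here `r = 2n`, so source and target of `Φ` are free of the same rank
`4 ^ n` and it is enough that `Φ` is surjective, i.e. that the matrices `φ(v, w)` generate
`M_{2^n}(R)`. After a simultaneous permutation of rows and columns,
`φ((a, v), (b, w)) = [[φ(v, w), a], [b, -φ(v, w)]]`. The choices `a = 1` and `b = 1` (all else zero)
give the two off-diagonal block units, hence the idempotent `diag(1, 0)`, which cuts `diag(x, 0)`
out of `diag(x, -x)`; so generation by the `φ(v, w)` passes from each size to the
next, starting with `M_1(R) = R`, which needs no generators.
-/

section CliffordAlgebraOfFree

variable {R M N : Type*} [CommRing R] [AddCommGroup M] [Module R M] [AddCommGroup N] [Module R N]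

/-- The linear isomorphism from the Clifford algebra of a quadratic form on a free module to the
exterior algebra. A bilinear form with `B x x = Q x` is read off from a basis, so that `2` need not
be invertible. -/
def cliffordEquivExterior {ι : Type*} [LinearOrder ι] (Q : QuadraticForm R M)
    (b : Module.Basis ι R M) : CliffordAlgebra Q ≃ₗ[R] ExteriorAlgebra R M :=
  CliffordAlgebra.changeFormEquiv (B := -Q.toBilin b) <| by
    rw [LinearMap.BilinMap.toQuadraticMap_neg, QuadraticMap.toQuadraticMap_toBilin, zero_sub]

/-- The basis of the Clifford algebra of a quadratic form on a free module, indexed by the finite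
sets of basis vectors: it corresponds to the basis of the exterior algebra under
`cliffordEquivExterior`. -/
def cliffordBasis {ι : Type*} [LinearOrder ι] (Q : QuadraticForm R M)
    (b : Module.Basis ι R M) : Module.Basis (Finset ι) R (CliffordAlgebra Q) :=
  b.ExteriorAlgebra.map (cliffordEquivExterior Q b).symm

theorem bijective_of_surjective_of_basis_equiv {ι κ : Type*} [Finite κ] (b : Module.Basis ι R M)
    (c : Module.Basis κ R N) (e : ι ≃ κ) {f : M →ₗ[R] N} (hf : Function.Surjective f) :
    Function.Bijective f :=
  have := Module.Finite.of_basis c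
  OrzechProperty.bijective_of_surjective_of_injective (b.equiv c e).toLinearMap f
    (b.equiv c e).injective hf

theorem cliffordAlgebra_bijective_of_surjective {A ι κ : Type*} [Ring A] [Algebra R A] [Fintype ι]
    [Fintype κ] {Q : QuadraticForm R M} (b : Module.Basis ι R M) (c : Module.Basis κ R A)
    (hcard : Fintype.card κ = 2 ^ Fintype.card ι) {Φ : CliffordAlgebra Q →ₐ[R] A}
    (hΦ : Function.Surjective Φ) : Function.Bijective Φ := by
  have e : Finset (Fin (Fintype.card ι)) ≃ κ := Fintype.equivOfCardEq (by simp [hcard])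
  exact bijective_of_surjective_of_basis_equiv (cliffordBasis Q (b.reindex (Fintype.equivFin ι)))
    c e (f := Φ.toLinearMap) hΦ

theorem cliffordAlgebra_range_eq_adjoin {A : Type*} [Ring A] [Algebra R A]
    {Q : QuadraticForm R M} (Φ : CliffordAlgebra Q →ₐ[R] A) :
    Φ.range = Algebra.adjoin R (Set.range (Φ ∘ CliffordAlgebra.ι Q)) := by
  rw [← Algebra.map_top, ← CliffordAlgebra.adjoin_range_ι, AlgHom.map_adjoin, ← Set.range_comp]

end CliffordAlgebraOfFree

section BlockGeneration

variable {R S κ : Type*} [CommSemiring R] [Semiring S] [Algebra R S] [Fintype κ] [DecidableEq κ]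
  {A : Subalgebra R (Matrix (κ ⊕ κ) (κ ⊕ κ) S)} {s : Set (Matrix κ κ S)}

theorem fromBlocks_corner_mem (h₁ : fromBlocks 1 0 0 0 ∈ A)
    (hs : ∀ x ∈ s, ∃ y, fromBlocks x 0 0 y ∈ A) {x : Matrix κ κ S}
    (hx : x ∈ Algebra.adjoin R s) : fromBlocks x 0 0 0 ∈ A := by
  induction hx using Algebra.adjoin_induction with
  | mem x hx =>
    obtain ⟨y, hy⟩ := hs x hx
    simpa [fromBlocks_multiply] using A.mul_mem h₁ hy
  | algebraMap r =>
    simpa [fromBlocks_smul, Algebra.algebraMap_eq_smul_one] using A.smul_mem h₁ r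
  | add x y _ _ hx hy => simpa [fromBlocks_add] using A.add_mem hx hy
  | mul x y _ _ hx hy => simpa [fromBlocks_multiply] using A.mul_mem hx hy

theorem subalgebra_eq_top_of_fromBlocks_mem (hs : Algebra.adjoin R s = ⊤)
    (h₁₂ : fromBlocks 0 1 0 0 ∈ A) (h₂₁ : fromBlocks 0 0 1 0 ∈ A)
    (hdiag : ∀ x ∈ s, ∃ y, fromBlocks x 0 0 y ∈ A) : A = ⊤ := by
  have h₁₁ : fromBlocks 1 0 0 0 ∈ A := by
    simpa [fromBlocks_multiply] using A.mul_mem h₁₂ h₂₁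
  have corner (x : Matrix κ κ S) : fromBlocks x 0 0 0 ∈ A :=
    fromBlocks_corner_mem h₁₁ hdiag (hs ▸ Algebra.mem_top)
  refine Algebra.eq_top_iff.2 fun M => ?_
  have decomp : M = fromBlocks M.toBlocks₁₁ 0 0 0 +
      fromBlocks M.toBlocks₁₂ 0 0 0 * fromBlocks 0 1 0 0 +
      fromBlocks 0 0 1 0 * fromBlocks M.toBlocks₂₁ 0 0 0 +
      fromBlocks 0 0 1 0 * fromBlocks M.toBlocks₂₂ 0 0 0 * fromBlocks 0 1 0 0 := by
    conv_lhs => rw [← fromBlocks_toBlocks M]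
    simp [fromBlocks_multiply, fromBlocks_add]
  rw [decomp]
  exact A.add_mem (A.add_mem (A.add_mem (corner _) (A.mul_mem (corner _) h₁₂))
    (A.mul_mem h₂₁ (corner _))) (A.mul_mem (A.mul_mem h₂₁ (corner _)) h₁₂)

theorem adjoin_eq_top_of_reindex_fromBlocks_mem {μ : Type*} [Fintype μ] [DecidableEq μ]
    (e : κ ⊕ κ ≃ μ) {t : Set (Matrix μ μ S)} (hs : Algebra.adjoin R s = ⊤)
    (h₁₂ : reindex e e (fromBlocks 0 1 0 0) ∈ t) (h₂₁ : reindex e e (fromBlocks 0 0 1 0) ∈ t)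
    (hdiag : ∀ x ∈ s, ∃ y, reindex e e (fromBlocks x 0 0 y) ∈ t) : Algebra.adjoin R t = ⊤ := by
  let E := reindexAlgEquiv R S e
  have hcomap : (Algebra.adjoin R t).comap E.toAlgHom = ⊤ :=
    subalgebra_eq_top_of_fromBlocks_mem hs (Algebra.subset_adjoin h₁₂)
      (Algebra.subset_adjoin h₂₁) fun x hx =>
        (hdiag x hx).imp fun _ hy => Algebra.subset_adjoin hy
  refine Algebra.eq_top_iff.2 fun M => ?_
  have hM : E.symm M ∈ (Algebra.adjoin R t).comap E.toAlgHom := hcomap ▸ Algebra.mem_top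
  simpa using hM

theorem adjoin_empty_matrix_eq_top {ι : Type*} [Subsingleton ι] [Fintype ι] [DecidableEq ι] :
    Algebra.adjoin R (∅ : Set (Matrix ι ι R)) = ⊤ := by
  rw [Algebra.adjoin_empty, eq_comm, ← Algebra.surjective_algebraMap_iff]
  intro M
  obtain _ | ⟨⟨i⟩⟩ := isEmpty_or_nonempty ι
  · exact ⟨0, Subsingleton.elim _ _⟩
  · refine ⟨M i i, ?_⟩
    ext j k
    simp [algebraMap_matrix_apply, Subsingleton.elim j i, Subsingleton.elim k i]

end BlockGeneration

section BlockPermutation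

/-- The permutation `(i, j) ↦ (i + j, j)` of the four summands `(i, j) ∈ (ℤ/2)²`. It makes the
parity of `i + j`, rather than `i`, the outer block index. -/
def sumSumShear (ι : Type*) : (ι ⊕ ι) ⊕ (ι ⊕ ι) ≃ (ι ⊕ ι) ⊕ (ι ⊕ ι) :=
  (Equiv.sumSumSumComm ι ι ι ι).trans <|
    ((Equiv.refl _).sumCongr (Equiv.sumComm ι ι)).trans (Equiv.sumSumSumComm ι ι ι ι)

theorem reindex_sumSumShear_fromBlocks {ι α : Type*} [Zero α]
    (A B C D A' B' C' D' : Matrix ι ι α) :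
    reindex (sumSumShear ι) (sumSumShear ι)
        (fromBlocks (fromBlocks 0 B C' 0) (fromBlocks A 0 0 D') (fromBlocks A' 0 0 D)
          (fromBlocks 0 B' C 0)) =
      fromBlocks 0 (fromBlocks A B C D) (fromBlocks A' B' C' D') 0 := by
  ext ((i | i) | (i | i)) ((j | j) | (j | j)) <;> rfl

theorem reindex_sumCongr_fromBlocks {ι κ μ ν α : Type*} (e : ι ≃ κ) (f : μ ≃ ν)
    (A : Matrix ι ι α) (B : Matrix ι μ α) (C : Matrix μ ι α) (D : Matrix μ μ α) :
    reindex (e.sumCongr f) (e.sumCongr f) (fromBlocks A B C D) =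
      fromBlocks (reindex e e A) (reindex e f B) (reindex f e C) (reindex f f D) := by
  ext (i | i) (j | j) <;> rfl

theorem reindex_fromBlocks_smul_one {R ι μ : Type*} [Semiring R] [DecidableEq ι] [DecidableEq μ]
    (e : ι ⊕ ι ≃ μ) (r : R) :
    reindex e e (fromBlocks (r • 1) 0 0 (r • 1)) = r • (1 : Matrix μ μ R) := by
  rw [← smul_zero r, ← fromBlocks_smul, fromBlocks_one, ← submatrix_one_equiv e.symm]
  rfl

end BlockPermutation

section SuslinMatrix

variable {R : Type} [CommRing R]

theorem sus_succ (n : ℕ) (a b : R) (v w : Fin (n + 1) → R) :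
    sus R (n + 1) (Fin.cons a v) (Fin.cons b w) =
      reindex (pow2Equiv n) (pow2Equiv n)
        (fromBlocks (a • 1) (sus R n v w) (-susBar R n v w) (b • 1)) :=
  rfl

theorem susBar_succ (n : ℕ) (a b : R) (v w : Fin (n + 1) → R) :
    susBar R (n + 1) (Fin.cons a v) (Fin.cons b w) =
      reindex (pow2Equiv n) (pow2Equiv n)
        (fromBlocks (b • 1) (-sus R n v w) (susBar R n v w) (a • 1)) := by
  simp [susBar, sus_succ, fromBlocks_transpose]

theorem neg_phiMat (n : ℕ) (v w : Fin (n + 1) → R) :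
    -phiMat R n v w =
      reindex (pow2Equiv n) (pow2Equiv n) (fromBlocks 0 (-sus R n v w) (-susBar R n v w) 0) := by
  rw [← neg_zero, ← fromBlocks_neg]
  rfl

/-- The bijection of row and column indices under which `phiMat R (n + 1)` is a two-by-two block
matrix built from `phiMat R n`. -/
def phiSuccEquiv (n : ℕ) : Fin (2 ^ (n + 1)) ⊕ Fin (2 ^ (n + 1)) ≃ Fin (2 ^ (n + 1 + 1)) :=
  let e := (pow2Equiv n).sumCongr (pow2Equiv n)
  e.symm.trans <| (sumSumShear _).trans <| e.trans (pow2Equiv (n + 1))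

theorem phiMat_succ (n : ℕ) (a b : R) (v w : Fin (n + 1) → R) :
    phiMat R (n + 1) (Fin.cons a v) (Fin.cons b w) =
      reindex (phiSuccEquiv n) (phiSuccEquiv n)
        (fromBlocks (phiMat R n v w) (a • 1) (b • 1) (-phiMat R n v w)) := by
  let e := (pow2Equiv n).sumCongr (pow2Equiv n)
  have blocks : fromBlocks (phiMat R n v w) (a • 1) (b • 1) (-phiMat R n v w) =
      reindex e e (fromBlocks (fromBlocks 0 (sus R n v w) (susBar R n v w) 0)
        (fromBlocks (a • 1) 0 0 (a • 1)) (fromBlocks (b • 1) 0 0 (b • 1))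
        (fromBlocks 0 (-sus R n v w) (-susBar R n v w) 0)) := by
    rw [reindex_sumCongr_fromBlocks, reindex_fromBlocks_smul_one, reindex_fromBlocks_smul_one,
      ← neg_phiMat, ← phiMat]
  have collapse : e.trans (phiSuccEquiv n) =
      ((sumSumShear _).trans e).trans (pow2Equiv (n + 1)) := by
    simp [phiSuccEquiv, e, ← Equiv.trans_assoc]
  calc phiMat R (n + 1) (Fin.cons a v) (Fin.cons b w)
      = reindex (pow2Equiv (n + 1)) (pow2Equiv (n + 1)) (reindex e e (fromBlocks 0
          (fromBlocks (a • 1) (sus R n v w) (-susBar R n v w) (b • 1))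
          (fromBlocks (b • 1) (-sus R n v w) (susBar R n v w) (a • 1)) 0)) := by
        rw [reindex_sumCongr_fromBlocks, ← sus_succ, ← susBar_succ]
        rfl
    _ = reindex (phiSuccEquiv n) (phiSuccEquiv n)
          (fromBlocks (phiMat R n v w) (a • 1) (b • 1) (-phiMat R n v w)) := by
        rw [← reindex_sumSumShear_fromBlocks, blocks]
        simp only [← Equiv.trans_apply, reindex_trans, collapse]

theorem phiMat_zero (v w : Fin 1 → R) :
    phiMat R 0 v w =
      reindex (pow2Equiv 0) (pow2Equiv 0) (fromBlocks 0 (v 0 • 1) (w 0 • 1) 0) := by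
  simp only [phiMat, susBar, sus, transpose_smul, transpose_one]

theorem sus_apply_zero_zero (n : ℕ) : sus R n 0 0 = 0 := by
  induction n with
  | zero => simp [sus]
  | succ n ih => simp [sus, Pi.zero_comp, ih]

theorem phiMat_apply_zero_zero (n : ℕ) : phiMat R n 0 0 = 0 := by
  simp [phiMat, susBar, sus_apply_zero_zero]

theorem adjoin_range_phiMat_eq_top (n : ℕ) :
    Algebra.adjoin R (Set.range fun x : (Fin (n + 1) → R) × (Fin (n + 1) → R) =>
      phiMat R n x.1 x.2) = ⊤ := by
  induction n with
  | zero =>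
    have : Subsingleton (Fin (2 ^ 0)) := inferInstanceAs (Subsingleton (Fin 1))
    refine adjoin_eq_top_of_reindex_fromBlocks_mem (pow2Equiv 0) (s := ∅)
      adjoin_empty_matrix_eq_top ⟨(1, 0), ?_⟩ ⟨(0, 1), ?_⟩ (by simp)
    · simp [phiMat_zero]
    · simp [phiMat_zero]
  | succ n ih =>
    refine adjoin_eq_top_of_reindex_fromBlocks_mem (phiSuccEquiv n) ih
      ⟨(Fin.cons 1 0, Fin.cons 0 0), ?_⟩ ⟨(Fin.cons 0 0, Fin.cons 1 0), ?_⟩ ?_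
    · simp [phiMat_succ, phiMat_apply_zero_zero]
    · simp [phiMat_succ, phiMat_apply_zero_zero]
    · rintro _ ⟨⟨v, w⟩, rfl⟩
      refine ⟨-phiMat R n v w, (Fin.cons 0 v, Fin.cons 0 w), ?_⟩
      simp only [phiMat_succ, zero_smul]

end SuslinMatrix

/-- for `n ≥ 1`, the `R`-algebra homomorphism `φ` from the Clifford algebra
of the hyperbolic form on `R^n ⊕ R^n` to `M_{2^n}(R)` extending the linear map
`(v, w) ↦ [[0, S_{n-1}(v,w)], [S̄_{n-1}(v,w), 0]]` is an isomorphism.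
(Stated with `n + 1` in place of `n`.) -/
theorem clifford_iso_matrix (R : Type) [CommRing R] (n : ℕ)
    (Φ : CliffordAlgebra (hypForm R (n + 1)) →ₐ[R]
      Matrix (Fin (2 ^ (n + 1))) (Fin (2 ^ (n + 1))) R)
    (hΦ : ∀ x : (Fin (n + 1) → R) × (Fin (n + 1) → R),
      Φ (CliffordAlgebra.ι (hypForm R (n + 1)) x) = phiMat R n x.1 x.2) :
    Function.Bijective Φ := by
  have hrange : Set.range (Φ ∘ CliffordAlgebra.ι (hypForm R (n + 1))) =
      Set.range fun x : (Fin (n + 1) → R) × (Fin (n + 1) → R) => phiMat R n x.1 x.2 :=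
    congrArg Set.range (funext hΦ)
  have hsurj : Function.Surjective Φ := by
    rw [← AlgHom.range_eq_top, cliffordAlgebra_range_eq_adjoin, hrange, adjoin_range_phiMat_eq_top]
  exact cliffordAlgebra_bijective_of_surjective
    ((Pi.basisFun R (Fin (n + 1))).prod (Pi.basisFun R (Fin (n + 1))))
    (Matrix.stdBasis R (Fin (2 ^ (n + 1))) (Fin (2 ^ (n + 1)))) (by simp [pow_add]) hsurj
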